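/- Nondegeneracy of the CSQR futures elasticity matrix (Appendix, case γ ≠ κ): Let γ, κ, t, T₁, T₂ be real numbers with γ ≠ κ. Then exp(−γ·T₁)·(exp(−κ·(T₂ − t)) − exp(−γ·(T₂ − t))) = exp(−γ·T₂)·(exp(−κ·(T₁ − t)) − exp(−γ·(T₁ − t))) if and only if T₁ = T₂. -/

import Mathlib

/-- Nondegeneracy of the CSQR futures elasticity matrix (case γ ≠ κ). -/
theorem csqr_elasticity_nondegenerate
    (γ κ t T₁ T₂ : ℝ) (h : γ ≠ κ) :
    Real.exp (-(γ * T₁)) * (Real.exp (-(κ * (T₂ - t))) - Real.exp (-(γ * (T₂ - t))))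
      = Real.exp (-(γ * T₂)) * (Real.exp (-(κ * (T₁ - t))) - Real.exp (-(γ * (T₁ - t))))
    ↔ T₁ = T₂ := by
  constructor
  · intro e
    rw [mul_sub (Real.exp _), mul_sub (Real.exp _), ← Real.exp_add, ← Real.exp_add, ← Real.exp_add, ← Real.exp_add] at e
    have h2 : -(γ * T₁) + -(γ * (T₂ - t)) = -(γ * T₂) + -(γ * (T₁ - t)) := by ring
    rw [h2] at e
    have e2 := Real.exp_injective (sub_left_injective e)
    have e3 : (γ - κ) * (T₁ - T₂) = 0 := by linarith
    rcases mul_eq_zero.mp e3 with h3 | h3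
    · exact absurd (sub_eq_zero.mp h3) h
    · exact sub_eq_zero.mp h3
  · rintro rfl
    rfl
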